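/- arXiv:2602.06693 — 3 statements merged into one kernel-verified Lean document; each statement's English description precedes it below -/
import Mathlib

section
/- Consider an SL instance in which the adjacency relation is complete bipartite, r j = ℓ j = r' j = 0 and d j = 1 for all clients j, p' i j = 0 for all i, j, and the T2 processing times do not depend on the helper, i.e., p i j = q j for some q : J → ℕ. Then for every k ∈ ℕ there exists a feasible SL schedule with makespan at most k if and only if there exists an assignment Y : J → I with |{j : Y j = i}| ≤ M i and ∑_{j : Y j = i} q j ≤ k for every helper i. -/
/-- Feasibility of an SL schedule `(Y, s, s')` for an SL instance: `Y` respects the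
adjacency relation `E` and the memory capacities `M` (w.r.t. demands `d`), the T2 of
client `j` starts no earlier than its release time `r j`, its T4 starts no earlier
than `ℓ j` slots after its T2 completes, and for distinct clients assigned to the
same helper the T2/T4 processing intervals are pairwise disjoint. -/
def SLFeasible {J I : Type*} [Fintype J] [DecidableEq I]
    (E : J → I → Prop) (M : I → ℕ) (d : J → ℕ) (r ℓ : J → ℕ) (p p' : I → J → ℕ)
    (Y : J → I) (s s' : J → ℕ) : Prop :=
  (∀ j : J, E j (Y j)) ∧
  (∀ i : I, ∑ j ∈ Finset.univ.filter (fun j => Y j = i), d j ≤ M i) ∧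
  (∀ j : J, r j ≤ s j) ∧
  (∀ j : J, s j + p (Y j) j + ℓ j ≤ s' j) ∧
  (∀ j j' : J, j ≠ j' → Y j = Y j' →
    Disjoint (Set.Ico (s j) (s j + p (Y j) j))
      (Set.Ico (s j') (s j' + p (Y j') j')) ∧
    Disjoint (Set.Ico (s j) (s j + p (Y j) j))
      (Set.Ico (s' j') (s' j' + p' (Y j') j')) ∧
    Disjoint (Set.Ico (s' j) (s' j + p' (Y j) j))
      (Set.Ico (s j') (s j' + p (Y j') j')) ∧
    Disjoint (Set.Ico (s' j) (s' j + p' (Y j) j))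
      (Set.Ico (s' j') (s' j' + p' (Y j') j')))

/-- The makespan of an SL schedule: the maximum over clients `j` of the completion
time `c j = s' j + p' (Y j) j + r' j`. -/
def SLMakespan {J I : Type*} [Fintype J]
    (r' : J → ℕ) (p' : I → J → ℕ) (Y : J → I) (s' : J → ℕ) : ℕ :=
  Finset.univ.sup (fun j => s' j + p' (Y j) j + r' j)

/-!
The slots in which a helper processes its clients are disjoint and lie in `[0, k)`, so counting them
bounds the total processing time of the helper by `k`. Conversely, when releases, delays and tails
vanish, each helper can serve its clients one after another without idling, running each T4
immediately after the corresponding T2; the helper then finishes exactly at its total processing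
time.
-/

section SequentialStart

variable {ι κ N : Type*} [Fintype ι] [LinearOrder ι] [DecidableEq κ]

/-- The start time of job `j` when every machine runs the jobs assigned to it by `f`, of lengths
`w`, in increasing order and without idle time. -/
def sequentialStart [AddCommMonoid N] (f : ι → κ) (w : ι → N) (j : ι) : N :=
  ∑ x with f x = f j ∧ x < j, w x

theorem sequentialStart_add_self [AddCommMonoid N] (f : ι → κ) (w : ι → N) (j : ι) :
    sequentialStart f w j + w j = ∑ x with f x = f j ∧ x ≤ j, w x := by
  have insert_eq : ({x | f x = f j ∧ x ≤ j} : Finset ι) =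
      insert j ({x | f x = f j ∧ x < j} : Finset ι) := by
    ext x
    simp only [Finset.mem_filter_univ, Finset.mem_insert, le_iff_eq_or_lt]
    aesop
  rw [insert_eq, Finset.sum_insert (by simp), add_comm, sequentialStart]

variable [AddCommMonoid N] [PartialOrder N] [CanonicallyOrderedAdd N]

theorem sequentialStart_add_self_le_sum_fiber (f : ι → κ) (w : ι → N) (j : ι) :
    sequentialStart f w j + w j ≤ ∑ x with f x = f j, w x := by
  rw [sequentialStart_add_self]
  exact Finset.sum_le_sum_of_subset (Finset.monotone_filter_right _ fun _ _ hx => hx.1)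

theorem sequentialStart_add_self_le_of_lt {f : ι → κ} (w : ι → N) {j j' : ι}
    (hf : f j = f j') (hlt : j < j') :
    sequentialStart f w j + w j ≤ sequentialStart f w j' := by
  rw [sequentialStart_add_self]
  exact Finset.sum_le_sum_of_subset
    (Finset.monotone_filter_right _ fun _ _ hx => ⟨hx.1.trans hf, hx.2.trans_lt hlt⟩)

theorem sequentialStart_separated {f : ι → κ} (w : ι → N) {j j' : ι}
    (hne : j ≠ j') (hf : f j = f j') :
    sequentialStart f w j + w j ≤ sequentialStart f w j' ∨
      sequentialStart f w j' + w j' ≤ sequentialStart f w j :=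
  hne.lt_or_gt.imp (sequentialStart_add_self_le_of_lt w hf)
    (sequentialStart_add_self_le_of_lt w hf.symm)

end SequentialStart

theorem sum_card_le_of_pairwiseDisjoint {ι α : Type*} {T : Finset ι} {A : ι → Finset α}
    {S : Finset α} (hdisj : (T : Set ι).PairwiseDisjoint A) (hsub : ∀ j ∈ T, A j ⊆ S) :
    ∑ j ∈ T, (A j).card ≤ S.card := by
  classical
  rw [← Finset.card_biUnion hdisj]
  exact Finset.card_le_card (Finset.biUnion_subset.2 hsub)

section Schedule

variable {J I : Type*} {r' : J → ℕ} {p p' : I → J → ℕ} {Y : J → I} {s s' : J → ℕ}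

/-- The time slots in which the helper of client `j` processes `j`, during its T2 or its T4. -/
def slBusySlots (p p' : I → J → ℕ) (Y : J → I) (s s' : J → ℕ) (j : J) : Finset ℕ :=
  Finset.Ico (s j) (s j + p (Y j) j) ∪ Finset.Ico (s' j) (s' j + p' (Y j) j)

theorem card_slBusySlots {j : J} (hs' : s j + p (Y j) j ≤ s' j) :
    (slBusySlots p p' Y s s' j).card = p (Y j) j + p' (Y j) j := by
  rw [slBusySlots, Finset.card_union_of_disjoint, Nat.card_Ico, Nat.card_Ico,
    Nat.add_sub_cancel_left, Nat.add_sub_cancel_left]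
  exact (Finset.Ico_disjoint_Ico_consecutive _ _ _).mono_right (Finset.Ico_subset_Ico_left hs')

theorem slBusySlots_subset_range {j : J} {k : ℕ} (hs' : s j + p (Y j) j ≤ s' j)
    (hk : s' j + p' (Y j) j ≤ k) : slBusySlots p p' Y s s' j ⊆ Finset.range k := by
  intro t ht
  simp only [slBusySlots, Finset.mem_union, Finset.mem_Ico] at ht
  rw [Finset.mem_range]
  omega

variable [Fintype J]

theorem slMakespan_le_iff {k : ℕ} :
    SLMakespan r' p' Y s' ≤ k ↔ ∀ j, s' j + p' (Y j) j + r' j ≤ k := by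
  simp [SLMakespan]

variable [DecidableEq I] {E : J → I → Prop} {M : I → ℕ} {d r ℓ : J → ℕ}

theorem SLFeasible.disjoint_slBusySlots (h : SLFeasible E M d r ℓ p p' Y s s') {j j' : J}
    (hne : j ≠ j') (hY : Y j = Y j') :
    Disjoint (slBusySlots p p' Y s s' j) (slBusySlots p p' Y s s' j') := by
  obtain ⟨-, -, -, -, hdisj⟩ := h
  obtain ⟨h22, h24, h42, h44⟩ := hdisj j j' hne hY
  simp only [← Finset.coe_Ico, Finset.disjoint_coe] at h22 h24 h42 h44
  simp only [slBusySlots, Finset.disjoint_union_left, Finset.disjoint_union_right]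
  exact ⟨⟨h22, h42⟩, h24, h44⟩

theorem SLFeasible.sum_processing_le {k : ℕ} (h : SLFeasible E M d r ℓ p p' Y s s')
    (hk : SLMakespan r' p' Y s' ≤ k) (i : I) :
    ∑ j with Y j = i, (p i j + p' i j) ≤ k := by
  have t4_after_t2 (j : J) : s j + p (Y j) j ≤ s' j := by
    obtain ⟨-, -, -, hs', -⟩ := h
    exact le_of_add_le_left (hs' j)
  have t4_ends_by (j : J) : s' j + p' (Y j) j ≤ k := le_of_add_le_left (slMakespan_le_iff.1 hk j)
  calc ∑ j with Y j = i, (p i j + p' i j)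
      = ∑ j with Y j = i, (slBusySlots p p' Y s s' j).card := by
        refine Finset.sum_congr rfl fun j hj => ?_
        rw [card_slBusySlots (t4_after_t2 j), (Finset.mem_filter_univ j).1 hj]
    _ ≤ (Finset.range k).card := by
        refine sum_card_le_of_pairwiseDisjoint (fun j hj j' hj' hne => ?_)
          fun j _ => slBusySlots_subset_range (t4_after_t2 j) (t4_ends_by j)
        rw [Finset.mem_coe, Finset.mem_filter_univ] at hj hj'
        exact h.disjoint_slBusySlots hne (hj.trans hj'.symm)
    _ = k := Finset.card_range k

theorem slFeasible_of_separated (hE : ∀ j, E j (Y j)) (hM : ∀ i, ∑ j with Y j = i, d j ≤ M i)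
    (hr : ∀ j, r j ≤ s j) (hs' : ∀ j, s j + p (Y j) j + ℓ j ≤ s' j)
    (hsep : ∀ j j', j ≠ j' → Y j = Y j' →
      s' j + p' (Y j) j ≤ s j' ∨ s' j' + p' (Y j') j' ≤ s j) :
    SLFeasible E M d r ℓ p p' Y s s' := by
  refine ⟨hE, hM, hr, hs', fun j j' hne hY => ?_⟩
  have hj := hs' j
  have hj' := hs' j'
  have hjj' := hsep j j' hne hY
  simp only [Set.Ico_disjoint_Ico]
  omega

theorem exists_slFeasible_of_sum_processing_le {k : ℕ} (hr : ∀ j, r j = 0) (hℓ : ∀ j, ℓ j = 0)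
    (hr' : ∀ j, r' j = 0) (hE : ∀ j, E j (Y j)) (hM : ∀ i, ∑ j with Y j = i, d j ≤ M i)
    (hk : ∀ i, ∑ j with Y j = i, (p i j + p' i j) ≤ k) :
    ∃ s s' : J → ℕ, SLFeasible E M d r ℓ p p' Y s s' ∧ SLMakespan r' p' Y s' ≤ k := by
  let _ : LinearOrder J := LinearOrder.lift' (Fintype.equivFin J) (Fintype.equivFin J).injective
  let w (j : J) : ℕ := p (Y j) j + p' (Y j) j
  let s : J → ℕ := sequentialStart Y w
  refine ⟨s, fun j => s j + p (Y j) j,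
    slFeasible_of_separated hE hM (by simp [hr]) (by simp [hℓ]) fun j j' hne hY => ?_,
    slMakespan_le_iff.2 fun j => ?_⟩
  · simpa only [add_assoc] using sequentialStart_separated w hne hY
  · calc s j + p (Y j) j + p' (Y j) j + r' j
        = s j + w j := by rw [hr', add_zero, add_assoc]
      _ ≤ ∑ x with Y x = Y j, w x := sequentialStart_add_self_le_sum_fiber Y w j
      _ = ∑ x with Y x = Y j, (p (Y j) x + p' (Y j) x) :=
        Finset.sum_congr rfl fun x hx => by simp only [w, (Finset.mem_filter_univ x).1 hx]
      _ ≤ k := hk (Y j)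

end Schedule

theorem sl_restricted_iff_capacitated_assignment_general {J I : Type*} [Fintype J] [DecidableEq I]
    (E : J → I → Prop) (M : I → ℕ) (d : J → ℕ) (r ℓ r' : J → ℕ) (p p' : I → J → ℕ)
    (hr : ∀ j, r j = 0) (hℓ : ∀ j, ℓ j = 0) (hr' : ∀ j, r' j = 0) (k : ℕ) :
    (∃ (Y : J → I) (s s' : J → ℕ),
      SLFeasible E M d r ℓ p p' Y s s' ∧ SLMakespan r' p' Y s' ≤ k) ↔
    (∃ Y : J → I, (∀ j, E j (Y j)) ∧ ∀ i : I,
      ∑ j with Y j = i, d j ≤ M i ∧ ∑ j with Y j = i, (p i j + p' i j) ≤ k) := by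
  constructor
  · rintro ⟨Y, s, s', hfeas, hk⟩
    exact ⟨Y, hfeas.1, fun i => ⟨hfeas.2.1 i, hfeas.sum_processing_le hk i⟩⟩
  · rintro ⟨Y, hE, hY⟩
    exact ⟨Y, exists_slFeasible_of_sum_processing_le hr hℓ hr' hE (fun i => (hY i).1)
      fun i => (hY i).2⟩

/-- Restricted SL instances (complete bipartite adjacency, `r = ℓ = r' = 0`,
unit demands, `p' = 0`, helper-independent T2 times `q`): a feasible SL schedule of
makespan at most `k` exists iff there is an assignment respecting the cardinality
capacities whose total T2 time on each helper is at most `k`. -/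
theorem sl_restricted_iff_capacitated_assignment {J I : Type*}
    [Fintype J] [Fintype I] [Nonempty J] [Nonempty I] [DecidableEq I]
    (E : J → I → Prop) (M : I → ℕ) (d : J → ℕ) (r ℓ r' : J → ℕ)
    (p p' : I → J → ℕ) (q : J → ℕ)
    (hE : ∀ j i, E j i) (hr : ∀ j, r j = 0) (hℓ : ∀ j, ℓ j = 0)
    (hr' : ∀ j, r' j = 0) (hd : ∀ j, d j = 1)
    (hp' : ∀ i j, p' i j = 0) (hp : ∀ i j, p i j = q j) (k : ℕ) :
    (∃ (Y : J → I) (s s' : J → ℕ),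
      SLFeasible E M d r ℓ p p' Y s s' ∧ SLMakespan r' p' Y s' ≤ k) ↔
    (∃ Y : J → I, ∀ i : I,
      (Finset.univ.filter (fun j => Y j = i)).card ≤ M i ∧
      ∑ j ∈ Finset.univ.filter (fun j => Y j = i), q j ≤ k) := by
  simpa [hE, hd, hp, hp'] using
    sl_restricted_iff_capacitated_assignment_general E M d r ℓ r' p p' hr hℓ hr' k
end

section
/- Consider an SL instance in which the adjacency relation is complete bipartite, r j = ℓ j = r' j = 0 and d j = 1 for all clients j, p' i j = 0 for all i, j, and M i ≥ |J| for every helper i. Then for every k ∈ ℕ there exists a feasible SL schedule with makespan at most k if and only if there exists an assignment σ : J → I with ∑_{j : σ j = i} p i j ≤ k for every helper i; that is, the restricted SL instance has the same optimal makespan as the R||C_max instance with jobs J, machines I, and processing times p. -/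
/-!
On one helper the processing intervals are disjoint and all end by the makespan, so the lengths of
these intervals, that is, the load, sum to at most the makespan. Conversely, if each helper
processes its clients without idle time, in any fixed order, then every client finishes by the
load of its helper.
-/

theorem sum_le_of_pairwiseDisjoint_Ico {ι : Type*} {T : Finset ι} {s q : ι → ℕ} {k : ℕ}
    (hdisj : (T : Set ι).PairwiseDisjoint fun j => Set.Ico (s j) (s j + q j))
    (hk : ∀ j ∈ T, s j + q j ≤ k) : ∑ j ∈ T, q j ≤ k := by
  classical
  have hdisj' : (T : Set ι).PairwiseDisjoint fun j => Finset.Ico (s j) (s j + q j) := by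
    intro a ha b hb hab
    simpa only [Function.onFun, ← Finset.disjoint_coe, Finset.coe_Ico] using hdisj ha hb hab
  have hsub : (T.biUnion fun j => Finset.Ico (s j) (s j + q j)) ⊆ Finset.range k := by
    refine Finset.biUnion_subset.2 fun j hj x hx => ?_
    exact Finset.mem_range.2 ((Finset.mem_Ico.1 hx).2.trans_le (hk j hj))
  calc ∑ j ∈ T, q j = (T.biUnion fun j => Finset.Ico (s j) (s j + q j)).card := by
        simp [Finset.card_biUnion hdisj']
    _ ≤ (Finset.range k).card := Finset.card_le_card hsub
    _ = k := Finset.card_range k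

section SerialSchedule

variable {J I R : Type*} [Fintype J] [LinearOrder J] [DecidableEq I]

/-- The start time of job `j` when every machine processes the jobs that `Y` assigns to it one
after another without idle time, in the order of `J`, job `a` taking time `q a`. -/
def serialStart [AddCommMonoid R] (Y : J → I) (q : J → R) (j : J) : R :=
  ∑ a with Y a = Y j ∧ a < j, q a

theorem serialStart_add_eq_sum [AddCommMonoid R] (Y : J → I) (q : J → R) (j : J) :
    serialStart Y q j + q j = ∑ a with Y a = Y j ∧ a ≤ j, q a := by
  have hinsert : ({a | Y a = Y j ∧ a ≤ j} : Finset J) =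
      insert j ({a | Y a = Y j ∧ a < j} : Finset J) := by
    ext a
    simp only [Finset.mem_filter_univ, Finset.mem_insert, le_iff_eq_or_lt]
    grind
  rw [hinsert, Finset.sum_insert (by simp), add_comm, serialStart]

variable [AddCommMonoid R] [PartialOrder R] [CanonicallyOrderedAdd R]
  {Y : J → I} {a b : J}

theorem serialStart_add_le_load (Y : J → I) (q : J → R) (j : J) :
    serialStart Y q j + q j ≤ ∑ a with Y a = Y j, q a := by
  rw [serialStart_add_eq_sum]
  exact Finset.sum_le_sum_of_subset (Finset.monotone_filter_right _ fun _ _ h => h.1)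

theorem serialStart_add_le_serialStart (q : J → R) (hY : Y a = Y b) (hab : a < b) :
    serialStart Y q a + q a ≤ serialStart Y q b := by
  rw [serialStart_add_eq_sum]
  exact Finset.sum_le_sum_of_subset <|
    Finset.monotone_filter_right _ fun _ _ h => ⟨h.1.trans hY, h.2.trans_lt hab⟩

theorem disjoint_Ico_serialStart (q : J → R) (hY : Y a = Y b) (hab : a ≠ b) :
    Disjoint (Set.Ico (serialStart Y q a) (serialStart Y q a + q a))
      (Set.Ico (serialStart Y q b) (serialStart Y q b + q b)) := by
  wlog hlt : a < b generalizing a b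
  · exact (this hY.symm hab.symm (hab.lt_or_gt.resolve_left hlt)).symm
  rw [Set.disjoint_left]
  rintro x ⟨-, hxa⟩ ⟨hxb, -⟩
  exact (hxa.trans_le ((serialStart_add_le_serialStart q hY hlt).trans hxb)).false

end SerialSchedule

section Schedules

variable {J I : Type*} [Fintype J] [DecidableEq I] {E : J → I → Prop} {M : I → ℕ}
  {d r ℓ : J → ℕ} {p p' : I → J → ℕ} {Y : J → I}

theorem SLFeasible.load_le_makespan {s s' : J → ℕ} (h : SLFeasible E M d r ℓ p p' Y s s')
    (r' : J → ℕ) (i : I) : ∑ j with Y j = i, p i j ≤ SLMakespan r' p' Y s' := by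
  obtain ⟨-, -, -, hs', hdisj⟩ := h
  have hend (j : J) : s j + p (Y j) j ≤ SLMakespan r' p' Y s' := by
    have hj : s' j + p' (Y j) j + r' j ≤ SLMakespan r' p' Y s' :=
      Finset.le_sup (f := fun j => s' j + p' (Y j) j + r' j) (Finset.mem_univ j)
    have := hs' j
    omega
  calc ∑ j with Y j = i, p i j = ∑ j with Y j = i, p (Y j) j :=
        Finset.sum_congr rfl fun j hj => by rw [(Finset.mem_filter_univ j).1 hj]
    _ ≤ SLMakespan r' p' Y s' := by
        refine sum_le_of_pairwiseDisjoint_Ico (fun a ha b hb hab => ?_) fun j _ => hend j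
        simp only [Finset.coe_filter_univ, Set.mem_ofPred_eq] at ha hb
        exact (hdisj a b hab (ha.trans hb.symm)).1

theorem exists_slFeasible_makespan_le {r' : J → ℕ} {k : ℕ} (hr : ∀ j, r j = 0) (hℓ : ∀ j, ℓ j = 0)
    (hr' : ∀ j, r' j = 0) (hp' : ∀ i j, p' i j = 0) (hE : ∀ j, E j (Y j))
    (hM : ∀ i, ∑ j with Y j = i, d j ≤ M i) (hload : ∀ i, ∑ j with Y j = i, p i j ≤ k) :
    ∃ s s' : J → ℕ, SLFeasible E M d r ℓ p p' Y s s' ∧ SLMakespan r' p' Y s' ≤ k := by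
  obtain ⟨_, -⟩ := exists_wellFoundedLT J
  let q (j : J) : ℕ := p (Y j) j
  have hload' (j : J) : ∑ a with Y a = Y j, q a ≤ k :=
    (Finset.sum_congr rfl fun a ha => by simp only [q, (Finset.mem_filter_univ a).1 ha]).trans_le
      (hload (Y j))
  refine ⟨serialStart Y q, fun j => serialStart Y q j + q j, ⟨hE, hM, ?_, ?_, ?_⟩, ?_⟩
  · simp [hr]
  · simp [hℓ, q]
  · intro a b hab hY
    simpa [hp'] using disjoint_Ico_serialStart q hY hab
  · refine Finset.sup_le fun j _ => ?_
    simpa [hp', hr'] using (serialStart_add_le_load Y q j).trans (hload' j)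

end Schedules

theorem sl_restricted_iff_rcmax_general {J I : Type*} [Fintype J] [DecidableEq I]
    (E : J → I → Prop) (M : I → ℕ) (d : J → ℕ) (r ℓ r' : J → ℕ) (p p' : I → J → ℕ)
    (hr : ∀ j, r j = 0) (hℓ : ∀ j, ℓ j = 0) (hr' : ∀ j, r' j = 0) (hp' : ∀ i j, p' i j = 0)
    (k : ℕ) :
    (∃ (Y : J → I) (s s' : J → ℕ),
      SLFeasible E M d r ℓ p p' Y s s' ∧ SLMakespan r' p' Y s' ≤ k) ↔
    (∃ σ : J → I, (∀ j, E j (σ j)) ∧ (∀ i, ∑ j with σ j = i, d j ≤ M i) ∧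
      ∀ i, ∑ j with σ j = i, p i j ≤ k) := by
  refine exists_congr fun Y => ⟨?_, ?_⟩
  · rintro ⟨s, s', hfeas, hk⟩
    exact ⟨hfeas.1, hfeas.2.1, fun i => (hfeas.load_le_makespan r' i).trans hk⟩
  · rintro ⟨hE, hM, hload⟩
    exact exists_slFeasible_makespan_le hr hℓ hr' hp' hE hM hload

/-- Restricted SL instances (complete bipartite adjacency, `r = ℓ = r' = 0`,
unit demands, `p' = 0`, capacities at least `|J|`): a feasible SL schedule of
makespan at most `k` exists iff the R||C_max instance `(J, I, p)` admits an
assignment with load at most `k` on every machine. -/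
theorem sl_restricted_iff_rcmax {J I : Type*}
    [Fintype J] [Fintype I] [Nonempty J] [Nonempty I] [DecidableEq I]
    (E : J → I → Prop) (M : I → ℕ) (d : J → ℕ) (r ℓ r' : J → ℕ)
    (p p' : I → J → ℕ)
    (hE : ∀ j i, E j i) (hr : ∀ j, r j = 0) (hℓ : ∀ j, ℓ j = 0)
    (hr' : ∀ j, r' j = 0) (hd : ∀ j, d j = 1)
    (hp' : ∀ i j, p' i j = 0) (hM : ∀ i : I, Fintype.card J ≤ M i) (k : ℕ) :
    (∃ (Y : J → I) (s s' : J → ℕ),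
      SLFeasible E M d r ℓ p p' Y s s' ∧ SLMakespan r' p' Y s' ≤ k) ↔
    (∃ σ : J → I, ∀ i : I,
      ∑ j ∈ Finset.univ.filter (fun j => σ j = i), p i j ≤ k) := by
  have hcap (T : Finset J) (i : I) : T.card ≤ M i := T.card_le_univ.trans (hM i)
  simpa [hE, hd, hcap] using sl_restricted_iff_rcmax_general E M d r ℓ r' p p' hr hℓ hr' hp' k
end

section
/- Let ι be an SL instance in which r j = ℓ j = r' j = 0 for all clients j. Then ι admits a feasible SL schedule with makespan at most k if and only if there exists a feasible assignment Y with max_{i ∈ I} ∑_{j : Y j = i} (p i j + p' i j) ≤ k. In particular, if a feasible assignment exists, the minimum makespan of ι equals the minimum over all feasible assignments Y of max_{i ∈ I} ∑_{j : Y j = i} (p i j + p' i j). -/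
/-!
Lower bound: the time slots that a helper spends on its clients are pairwise disjoint and lie
below the makespan, so counting them bounds the helper's load. Upper bound: list the clients and
let every helper process its own clients in that order without idling, running the T4 of a client
right after its T2; a client then completes no later than the total load of its helper.
-/

open Finset

section Fiberwise

variable {J I A : Type*} [Fintype J] [DecidableEq I] [AddCommMonoid A]

lemma sum_fiber_congr (Y : J → I) (f : I → J → A) (i : I) :
    ∑ j with Y j = i, f i j = ∑ j with Y j = i, f (Y j) j :=
  sum_congr rfl fun j hj => by rw [(mem_filter.mp hj).2]

/-- The total weight of the elements strictly before `j` in the fiber of `Y` through `j`: the time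
at which `j` starts when each fiber is processed in increasing order without idling. -/
def precedingLoad [Preorder J] [DecidableLT J] (Y : J → I) (w : J → A) (j : J) : A :=
  ∑ x with Y x = Y j ∧ x < j, w x

variable [PartialOrder A] [CanonicallyOrderedAdd A]

section Preorder

variable [Preorder J] [DecidableLT J] {Y : J → I} {j j' : J}

lemma precedingLoad_add_le_sum (w : J → A) {T : Finset J} (hj : j ∈ T)
    (hT : ∀ x, Y x = Y j → x < j → x ∈ T) : precedingLoad Y w j + w j ≤ ∑ x ∈ T, w x := by
  have hj_notMem : j ∉ univ.filter fun x => Y x = Y j ∧ x < j := by simp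
  calc precedingLoad Y w j + w j
      = ∑ x ∈ cons j _ hj_notMem, w x := by rw [sum_cons, add_comm, precedingLoad]
    _ ≤ ∑ x ∈ T, w x := sum_le_sum_of_subset <| cons_subset.mpr
        ⟨hj, fun x hx => hT x (mem_filter.mp hx).2.1 (mem_filter.mp hx).2.2⟩

lemma precedingLoad_add_le_sum_fiber (Y : J → I) (w : J → A) (j : J) :
    precedingLoad Y w j + w j ≤ ∑ x with Y x = Y j, w x :=
  precedingLoad_add_le_sum w (by simp) fun x hx _ => by simp [hx]

lemma precedingLoad_add_le_precedingLoad (w : J → A) (hY : Y j = Y j') (hlt : j < j') :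
    precedingLoad Y w j + w j ≤ precedingLoad Y w j' :=
  precedingLoad_add_le_sum w (by simp [hY, hlt]) fun x hx hxj => by
    simp [hx.trans hY, hxj.trans hlt]

end Preorder

lemma exists_fiberwise_separated_starts (Y : J → I) (w : J → A) :
    ∃ t : J → A, (∀ j, t j + w j ≤ ∑ x with Y x = Y j, w x) ∧
      ∀ j j', j ≠ j' → Y j = Y j' → t j + w j ≤ t j' ∨ t j' + w j' ≤ t j := by
  let _ : LinearOrder J := LinearOrder.lift' (Fintype.equivFin J) (Fintype.equivFin J).injective
  refine ⟨precedingLoad Y w, precedingLoad_add_le_sum_fiber Y w, fun j j' hne hY => ?_⟩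
  exact hne.lt_or_gt.imp (precedingLoad_add_le_precedingLoad w hY)
    (precedingLoad_add_le_precedingLoad w hY.symm)

end Fiberwise

section Schedule

variable {J I : Type*} {p p' : I → J → ℕ} {Y : J → I} {s s' : J → ℕ}

/-- The time slots during which client `j` occupies its helper, for its T2 or for its T4; slot `n`
stands for the unit interval `[n, n + 1)`. -/
def busySlots (p p' : I → J → ℕ) (Y : J → I) (s s' : J → ℕ) (j : J) : Finset ℕ :=
  Ico (s j) (s j + p (Y j) j) ∪ Ico (s' j) (s' j + p' (Y j) j)

lemma card_busySlots {j : J} (hs : s j + p (Y j) j ≤ s' j) :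
    #(busySlots p p' Y s s' j) = p (Y j) j + p' (Y j) j := by
  have hdisj : Disjoint (Ico (s j) (s j + p (Y j) j)) (Ico (s' j) (s' j + p' (Y j) j)) :=
    (Ico_disjoint_Ico_consecutive _ _ _).mono_right (Ico_subset_Ico_left hs)
  rw [busySlots, card_union_of_disjoint hdisj, Nat.card_Ico, Nat.card_Ico,
    Nat.add_sub_cancel_left, Nat.add_sub_cancel_left]

lemma busySlots_subset_range {j : J} (hs : s j + p (Y j) j ≤ s' j) :
    busySlots p p' Y s s' j ⊆ range (s' j + p' (Y j) j) := by
  intro n hn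
  simp only [busySlots, mem_union, mem_Ico] at hn
  rw [mem_range]
  omega

variable [Fintype J]

lemma completion_le_slMakespan (r' : J → ℕ) (j : J) :
    s' j + p' (Y j) j ≤ SLMakespan r' p' Y s' :=
  (Nat.le_add_right _ (r' j)).trans <|
    le_sup (f := fun j => s' j + p' (Y j) j + r' j) (mem_univ j)

variable [DecidableEq I] {E : J → I → Prop} {M : I → ℕ} {d r ℓ : J → ℕ}

namespace SLFeasible

lemma t2_end_le_t4_start (h : SLFeasible E M d r ℓ p p' Y s s') (j : J) :
    s j + p (Y j) j ≤ s' j :=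
  (Nat.le_add_right _ (ℓ j)).trans (h.2.2.2.1 j)

lemma disjoint_busySlots (h : SLFeasible E M d r ℓ p p' Y s s') {j j' : J} (hne : j ≠ j')
    (hY : Y j = Y j') : Disjoint (busySlots p p' Y s s' j) (busySlots p p' Y s s' j') := by
  obtain ⟨h22, h24, h42, h44⟩ := h.2.2.2.2 j j' hne hY
  simp only [← coe_Ico, disjoint_coe] at h22 h24 h42 h44
  simp only [busySlots, disjoint_union_left, disjoint_union_right]
  exact ⟨⟨h22, h42⟩, h24, h44⟩

theorem load_le_slMakespan (h : SLFeasible E M d r ℓ p p' Y s s') (r' : J → ℕ) (i : I) :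
    ∑ j with Y j = i, (p i j + p' i j) ≤ SLMakespan r' p' Y s' := by
  have hdisj : ((univ.filter fun j => Y j = i : Finset J) : Set J).PairwiseDisjoint
      (busySlots p p' Y s s') := fun j hj j' hj' hne =>
    h.disjoint_busySlots hne ((mem_filter.mp hj).2.trans (mem_filter.mp hj').2.symm)
  have hsub : (univ.filter fun j => Y j = i).biUnion (busySlots p p' Y s s') ⊆
      range (SLMakespan r' p' Y s') := biUnion_subset.mpr fun j _ =>
    (busySlots_subset_range (h.t2_end_le_t4_start j)).trans
      (range_subset_range.mpr (completion_le_slMakespan r' j))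
  calc ∑ j with Y j = i, (p i j + p' i j)
      = ∑ j with Y j = i, (p (Y j) j + p' (Y j) j) :=
        sum_fiber_congr Y (fun i j => p i j + p' i j) i
    _ = ∑ j with Y j = i, #(busySlots p p' Y s s' j) :=
        sum_congr rfl fun j _ => (card_busySlots (h.t2_end_le_t4_start j)).symm
    _ = #((univ.filter fun j => Y j = i).biUnion (busySlots p p' Y s s')) :=
        (card_biUnion hdisj).symm
    _ ≤ #(range (SLMakespan r' p' Y s')) := card_le_card hsub
    _ = SLMakespan r' p' Y s' := card_range _

lemma of_separated_blocks {t : J → ℕ} (hE : ∀ j, E j (Y j))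
    (hM : ∀ i, ∑ j with Y j = i, d j ≤ M i) (hr : ∀ j, r j ≤ t j)
    (ht : ∀ j j', j ≠ j' → Y j = Y j' →
      t j + (p (Y j) j + ℓ j + p' (Y j) j) ≤ t j' ∨
        t j' + (p (Y j') j' + ℓ j' + p' (Y j') j') ≤ t j) :
    SLFeasible E M d r ℓ p p' Y t (fun j => t j + p (Y j) j + ℓ j) := by
  refine ⟨hE, hM, hr, fun _ => le_rfl, fun j j' hne hY => ?_⟩
  have hblocks := ht j j' hne hY
  refine ⟨?_, ?_, ?_, ?_⟩ <;>
  · simp only [Set.disjoint_left, Set.mem_Ico]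
    omega

end SLFeasible

theorem exists_slFeasible_completion_le_load (ℓ : J → ℕ) (p p' : I → J → ℕ)
    (hE : ∀ j, E j (Y j)) (hM : ∀ i, ∑ j with Y j = i, d j ≤ M i) :
    ∃ s s' : J → ℕ, SLFeasible E M d 0 ℓ p p' Y s s' ∧
      ∀ j, s' j + p' (Y j) j ≤ ∑ x with Y x = Y j, (p (Y j) x + ℓ x + p' (Y j) x) := by
  obtain ⟨t, ht_load, ht_sep⟩ :=
    exists_fiberwise_separated_starts Y fun j => p (Y j) j + ℓ j + p' (Y j) j
  refine ⟨t, _, .of_separated_blocks hE hM (fun j => Nat.zero_le _) ht_sep, fun j => ?_⟩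
  calc t j + p (Y j) j + ℓ j + p' (Y j) j
      = t j + (p (Y j) j + ℓ j + p' (Y j) j) := by ring
    _ ≤ ∑ x with Y x = Y j, (p (Y x) x + ℓ x + p' (Y x) x) := ht_load j
    _ = ∑ x with Y x = Y j, (p (Y j) x + ℓ x + p' (Y j) x) :=
        (sum_fiber_congr Y (fun i x => p i x + ℓ x + p' i x) (Y j)).symm

end Schedule

/-- For an SL instance with `r = ℓ = r' = 0`, a feasible SL schedule of makespan at
most `k` exists iff there is a feasible assignment `Y` with
`max_{i ∈ I} ∑_{j : Y j = i} (p i j + p' i j) ≤ k`. -/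
theorem sl_zeroed_makespan_iff_assignment_load {J I : Type*}
    [Fintype J] [Fintype I] [Nonempty J] [Nonempty I] [DecidableEq I]
    (E : J → I → Prop) (M : I → ℕ) (d : J → ℕ) (r ℓ r' : J → ℕ)
    (p p' : I → J → ℕ)
    (hr : ∀ j, r j = 0) (hℓ : ∀ j, ℓ j = 0) (hr' : ∀ j, r' j = 0) (k : ℕ) :
    (∃ (Y : J → I) (s s' : J → ℕ),
      SLFeasible E M d r ℓ p p' Y s s' ∧ SLMakespan r' p' Y s' ≤ k) ↔
    (∃ Y : J → I,
      (∀ j : J, E j (Y j)) ∧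
      (∀ i : I, ∑ j ∈ Finset.univ.filter (fun j => Y j = i), d j ≤ M i) ∧
      Finset.univ.sup
        (fun i => ∑ j ∈ Finset.univ.filter (fun j => Y j = i), (p i j + p' i j)) ≤ k) := by
  obtain rfl : r = 0 := funext hr
  obtain rfl : ℓ = 0 := funext hℓ
  obtain rfl : r' = 0 := funext hr'
  constructor
  · rintro ⟨Y, s, s', hfeas, hk⟩
    exact ⟨Y, hfeas.1, hfeas.2.1,
      Finset.sup_le fun i _ => (hfeas.load_le_slMakespan 0 i).trans hk⟩
  · rintro ⟨Y, hE, hM, hk⟩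
    obtain ⟨s, s', hfeas, hload⟩ := exists_slFeasible_completion_le_load 0 p p' hE hM
    refine ⟨Y, s, s', hfeas, Finset.sup_le fun j _ => (hload j).trans ?_⟩
    exact Finset.sup_le_iff.mp hk (Y j) (mem_univ _)
end
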